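/- (L∞ bounds for the optimal potential) Let 1 < p < ∞, q = p/(p−1), let u₀ be a nonnegative minimizer of J over U = (𝓗₀¹(Ω) ∩ L^{2q}(Ω)) ∖ {0}, set λ = J(u₀) and V₀ = M ‖u₀²‖_{L^q(Ω)}^{1−q} |u₀|^{2(q−1)}. Then ess sup_Ω u₀ ≤ (λ/M)^{(p−1)/2} ‖u₀‖_{L^{2q}(Ω)} and ess sup_Ω V₀ ≤ λ. -/

import Mathlib

open MeasureTheory Set Filter

noncomputable section

/-- The open unit square `Ω = (0,1) × (0,1)` in `ℝ²`. -/
def Omega : Set (ℝ × ℝ) := Ioo (0:ℝ) 1 ×ˢ Ioo (0:ℝ) 1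

/-- Test functions on a set `s`: smooth with compact support contained in `s`. -/
def IsTestOn (s : Set (ℝ × ℝ)) (φ : ℝ × ℝ → ℝ) : Prop :=
  ContDiff ℝ (⊤ : ℕ∞) φ ∧ HasCompactSupport φ ∧ tsupport φ ⊆ s

/-- Classical partial derivative in the `x`-direction. -/
def pdx (φ : ℝ × ℝ → ℝ) (p : ℝ × ℝ) : ℝ := fderiv ℝ φ p (1, 0)

/-- Classical partial derivative in the `y`-direction. -/
def pdy (φ : ℝ × ℝ → ℝ) (p : ℝ × ℝ) : ℝ := fderiv ℝ φ p (0, 1)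

/-- `g` is a weak `x`-partial derivative of `u` on `s`. -/
def HasWeakDerivXOn (s : Set (ℝ × ℝ)) (u g : ℝ × ℝ → ℝ) : Prop :=
  LocallyIntegrableOn u s volume ∧ LocallyIntegrableOn g s volume ∧
  ∀ φ : ℝ × ℝ → ℝ, IsTestOn s φ →
    ∫ p in s, u p * pdx φ p = - ∫ p in s, g p * φ p

/-- `g` is a weak `y`-partial derivative of `u` on `s`. -/
def HasWeakDerivYOn (s : Set (ℝ × ℝ)) (u g : ℝ × ℝ → ℝ) : Prop :=
  LocallyIntegrableOn u s volume ∧ LocallyIntegrableOn g s volume ∧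
  ∀ φ : ℝ × ℝ → ℝ, IsTestOn s φ →
    ∫ p in s, u p * pdy φ p = - ∫ p in s, g p * φ p

/-- Test functions on `Ω`. -/
def IsTest (φ : ℝ × ℝ → ℝ) : Prop := IsTestOn Omega φ

/-- Membership in the weighted Sobolev space `𝓗¹(Ω)`, with weak derivatives `gx, gy`:
`u ∈ L²(Ω)`, `gx = ∂ₓu`, `gy = ∂_y u` weakly, and `y^α₁ gx, x^α₂ gy ∈ L²(Ω)`. -/
structure MemH1 (α₁ α₂ : ℝ) (u gx gy : ℝ × ℝ → ℝ) : Prop where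
  memL2 : MemLp u 2 (volume.restrict Omega)
  weakX : HasWeakDerivXOn Omega u gx
  weakY : HasWeakDerivYOn Omega u gy
  wgx : MemLp (fun p => p.2 ^ α₁ * gx p) 2 (volume.restrict Omega)
  wgy : MemLp (fun p => p.1 ^ α₂ * gy p) 2 (volume.restrict Omega)

/-- The `𝓗¹(Ω)` norm of `u` (with weak derivatives `gx, gy`). -/
def H1Norm (α₁ α₂ : ℝ) (u gx gy : ℝ × ℝ → ℝ) : ℝ :=
  Real.sqrt ((∫ p in Omega, (u p) ^ 2) +
    (∫ p in Omega, (p.2 ^ α₁ * gx p) ^ 2) +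
    (∫ p in Omega, (p.1 ^ α₂ * gy p) ^ 2))

/-- Membership in `𝓗₀¹(Ω)`: member of `𝓗¹(Ω)` approximable in the `𝓗¹` norm by
test functions. -/
def MemH10 (α₁ α₂ : ℝ) (u gx gy : ℝ × ℝ → ℝ) : Prop :=
  MemH1 α₁ α₂ u gx gy ∧
  ∀ ε : ℝ, 0 < ε → ∃ φ : ℝ × ℝ → ℝ, IsTest φ ∧
    H1Norm α₁ α₂ (fun p => u p - φ p) (fun p => gx p - pdx φ p)
      (fun p => gy p - pdy φ p) < ε

/-- Membership in `H₀(Ω) = {u ∈ 𝓗₀¹(Ω) : ∫_Ω V u² < ∞}`. -/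
def MemH0 (α₁ α₂ : ℝ) (V u gx gy : ℝ × ℝ → ℝ) : Prop :=
  MemH10 α₁ α₂ u gx gy ∧
  IntegrableOn (fun p => V p * (u p) ^ 2) Omega volume

/-- The bilinear form `a(u,v)` associated with the sub-elliptic operator with potential `V`. -/
def aForm (α₁ α₂ : ℝ) (V u gx gy v hx hy : ℝ × ℝ → ℝ) : ℝ :=
  ∫ p in Omega, ((p.2 ^ α₁ * gx p) * (p.2 ^ α₁ * hx p) +
    (p.1 ^ α₂ * gy p) * (p.1 ^ α₂ * hy p) + V p * u p * v p)

/-- The bilinear form `a₁(u,v)` (no potential). -/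
def a1Form (α₁ α₂ : ℝ) (u gx gy v hx hy : ℝ × ℝ → ℝ) : ℝ :=
  ∫ p in Omega, ((p.2 ^ α₁ * gx p) * (p.2 ^ α₁ * hx p) +
    (p.1 ^ α₂ * gy p) * (p.1 ^ α₂ * hy p))

/-- Membership in `S_p = {V ∈ L^p(Ω) : V ≥ 0 a.e., ‖V‖_{L^p(Ω)} ≤ M}`. -/
def MemSp (ppow M : ℝ) (V : ℝ × ℝ → ℝ) : Prop :=
  MemLp V (ENNReal.ofReal ppow) (volume.restrict Omega) ∧
  (∀ᵐ p ∂(volume.restrict Omega), 0 ≤ V p) ∧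
  eLpNorm V (ENNReal.ofReal ppow) (volume.restrict Omega) ≤ ENNReal.ofReal M

/-- `u` (with weak derivatives `gx, gy`) is an eigenfunction of the sub-elliptic operator
with potential `V` for the eigenvalue `lam`. -/
def IsEigenfun (α₁ α₂ : ℝ) (V : ℝ × ℝ → ℝ) (lam : ℝ) (u gx gy : ℝ × ℝ → ℝ) : Prop :=
  MemH0 α₁ α₂ V u gx gy ∧
  ∀ v hx hy : ℝ × ℝ → ℝ, MemH0 α₁ α₂ V v hx hy →
    aForm α₁ α₂ V u gx gy v hx hy = lam * ∫ p in Omega, u p * v p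

/-- The first eigenvalue `λ₁(V) = inf { a(u,u) : u ∈ H₀(Ω), ‖u‖_{L²} = 1 }`. -/
def lam1 (α₁ α₂ : ℝ) (V : ℝ × ℝ → ℝ) : ℝ :=
  sInf { r | ∃ u gx gy : ℝ × ℝ → ℝ, MemH0 α₁ α₂ V u gx gy ∧
    (∫ p in Omega, (u p) ^ 2) = 1 ∧ r = aForm α₁ α₂ V u gx gy u gx gy }

/-- `sup { a(u,u) : u ∈ span(φ), ‖u‖_{L²(Ω)} = 1 }` for a finite family `φ` with
weak derivatives `φx, φy`. -/
def rayleighSup (α₁ α₂ : ℝ) (V : ℝ × ℝ → ℝ) {k : ℕ} (φ φx φy : Fin k → ℝ × ℝ → ℝ) : ℝ :=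
  sSup { s | ∃ c : Fin k → ℝ,
    (∫ p in Omega, (∑ i, c i * φ i p) ^ 2) = 1 ∧
    s = aForm α₁ α₂ V (fun p => ∑ i, c i * φ i p) (fun p => ∑ i, c i * φx i p)
      (fun p => ∑ i, c i * φy i p) (fun p => ∑ i, c i * φ i p)
      (fun p => ∑ i, c i * φx i p) (fun p => ∑ i, c i * φy i p) }

/-- The set of values `sup { a(u,u) : u ∈ E, ‖u‖ = 1 }` over `k`-dimensional
subspaces `E` of `H₀(Ω)` (represented by `L²(Ω)`-linearly independent families of
`k` elements of `H₀(Ω)`). -/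
def minmaxSet (α₁ α₂ : ℝ) (V : ℝ × ℝ → ℝ) (k : ℕ) : Set ℝ :=
  { r | ∃ φ φx φy : Fin k → ℝ × ℝ → ℝ,
      (∀ i, MemH0 α₁ α₂ V (φ i) (φx i) (φy i)) ∧
      (∀ c : Fin k → ℝ, (∀ᵐ p ∂(volume.restrict Omega), ∑ i, c i * φ i p = 0) → c = 0) ∧
      r = rayleighSup α₁ α₂ V φ φx φy }

/-- The `k`-th eigenvalue via the min-max principle. -/
def lamk (α₁ α₂ : ℝ) (V : ℝ × ℝ → ℝ) (k : ℕ) : ℝ := sInf (minmaxSet α₁ α₂ V k)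

/-- Membership in `U = (𝓗₀¹(Ω) ∩ L^{2q}(Ω)) \ {0}`. -/
def MemU (α₁ α₂ qe : ℝ) (u gx gy : ℝ × ℝ → ℝ) : Prop :=
  MemH10 α₁ α₂ u gx gy ∧
  MemLp u (ENNReal.ofReal (2 * qe)) (volume.restrict Omega) ∧
  ¬ (∀ᵐ p ∂(volume.restrict Omega), u p = 0)

/-- The functional `J(u) = (a₁(u,u) + M ‖u‖_{L^{2q}(Ω)}²) / ‖u‖_{L²(Ω)}²`. -/
def Jfun (α₁ α₂ M qe : ℝ) (u gx gy : ℝ × ℝ → ℝ) : ℝ :=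
  (a1Form α₁ α₂ u gx gy u gx gy +
    M * (∫ p in Omega, |u p| ^ (2 * qe)) ^ (1 / qe)) / (∫ p in Omega, (u p) ^ 2)


lemma aux_F (c : ℝ) : ∃ F : ℝ → ℝ, ContDiff ℝ (⊤ : ℕ∞) F ∧ (∀ t ≤ c, F t = t) ∧
    (∀ t, c < t → F t < t ∧ c ≤ F t) ∧ ∀ t, 0 ≤ deriv F t ∧ deriv F t ≤ 1 := by
  have hd : ∀ x : ℝ, HasDerivAt expNegInvGlue ((x⁻¹)^2 * expNegInvGlue x) x := by
    intro x
    simpa using expNegInvGlue.hasDerivAt_polynomial_eval_inv_mul 1 x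
  have hb : ∀ x : ℝ, (x⁻¹)^2 * expNegInvGlue x ≤ 2 := by
    intro x
    by_cases hx : x ≤ 0
    · simp [expNegInvGlue.zero_of_nonpos hx]
    · push Not at hx
      have h1 := Real.quadratic_le_exp_of_nonneg (x := x⁻¹) (by positivity)
      have h2 : expNegInvGlue x = (Real.exp (x⁻¹))⁻¹ := by
        simp [expNegInvGlue, not_le.2 hx, Real.exp_neg]
      rw [h2, ← div_eq_mul_inv, div_le_iff₀ (Real.exp_pos _)]
      have : 0 < x⁻¹ := by positivity
      nlinarith
  have hF : ∀ t : ℝ, HasDerivAt (fun t => t - expNegInvGlue (t - c) / 2)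
      (1 - (((t-c)⁻¹)^2 * expNegInvGlue (t-c)) / 2) t := by
    intro t
    have h1 := (hd (t - c)).comp t ((hasDerivAt_id t).sub_const c)
    have h2 := (hasDerivAt_id t).sub (h1.div_const 2)
    simpa [Function.comp_def] using! h2
  have hder : ∀ t, 0 ≤ deriv (fun t => t - expNegInvGlue (t - c) / 2) t ∧
      deriv (fun t => t - expNegInvGlue (t - c) / 2) t ≤ 1 := by
    intro t
    rw [(hF t).deriv]
    have h1 := hb (t - c)
    have h2 : 0 ≤ ((t-c)⁻¹)^2 * expNegInvGlue (t-c) :=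
      mul_nonneg (sq_nonneg _) (expNegInvGlue.nonneg _)
    constructor <;> linarith
  have hmono : Monotone (fun t => t - expNegInvGlue (t - c) / 2) :=
    monotone_of_deriv_nonneg (fun t => (hF t).differentiableAt) (fun t => (hder t).1)
  refine ⟨fun t => t - expNegInvGlue (t - c) / 2, ?_, ?_, ?_, hder⟩
  · have := (expNegInvGlue.contDiff (n := ⊤))
    fun_prop
  · intro t ht
    simp [expNegInvGlue.zero_of_nonpos (sub_nonpos.2 ht)]
  · intro t ht
    refine ⟨?_, ?_⟩
    · have := expNegInvGlue.pos_of_pos (sub_pos.2 ht)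
      simp only
      linarith
    · have := hmono ht.le
      simpa using this

lemma aux_lip {F : ℝ → ℝ} (hF : ContDiff ℝ (⊤ : ℕ∞) F)
    (hd : ∀ t, 0 ≤ deriv F t ∧ deriv F t ≤ 1) (a b : ℝ) : |F a - F b| ≤ |a - b| := by
  have := Convex.norm_image_sub_le_of_norm_deriv_le (f := F) (s := Set.univ) (C := 1) (x := b) (y := a)
    (fun x _ => (hF.differentiable (by simp)).differentiableAt)
    (fun x _ => by rw [Real.norm_eq_abs, abs_of_nonneg (hd x).1]; exact (hd x).2)
    convex_univ (mem_univ _) (mem_univ _)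
  simpa using this

lemma omega_open : IsOpen Omega := isOpen_Ioo.prod isOpen_Ioo

lemma omega_meas : MeasurableSet Omega := omega_open.measurableSet

instance omega_fin : IsFiniteMeasure (volume.restrict Omega) := by
  constructor
  rw [Measure.restrict_apply_univ]
  have : Omega ⊆ Icc (0:ℝ) 1 ×ˢ Icc (0:ℝ) 1 :=
    Set.prod_mono Ioo_subset_Icc_self Ioo_subset_Icc_self
  exact (measure_mono this).trans_lt (isCompact_Icc.prod isCompact_Icc).measure_lt_top

lemma aux_memLp {h ψ : ℝ × ℝ → ℝ} (hh : ContinuousOn h Omega) (hψ : Continuous ψ)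
    (hc : HasCompactSupport ψ) (hs : tsupport ψ ⊆ Omega) :
    MemLp (fun p => h p * ψ p) 2 (volume.restrict Omega) := by
  have hcont : ContinuousOn (fun p => h p * ψ p) Omega := hh.mul hψ.continuousOn
  obtain ⟨C, hC⟩ := IsCompact.exists_bound_of_continuousOn hc (hcont.mono hs)
  refine MemLp.of_bound (hcont.aestronglyMeasurable omega_meas) (max C 0) ?_
  refine Eventually.of_forall fun p => ?_
  by_cases hp : p ∈ tsupport ψ
  · exact (hC p hp).trans (le_max_left _ _)
  · simp [image_eq_zero_of_notMem_tsupport hp]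

lemma aux_CS {f h : ℝ × ℝ → ℝ} (hf : MemLp f 2 (volume.restrict Omega))
    (hh : MemLp h 2 (volume.restrict Omega)) :
    (∫ p in Omega, f p * h p) ^ 2 ≤ (∫ p in Omega, f p ^ 2) * (∫ p in Omega, h p ^ 2) := by
  have h1 := real_inner_mul_inner_self_le (hf.toLp f) (hh.toLp h)
  have key : ∀ {a b : ℝ × ℝ → ℝ} (ha : MemLp a 2 (volume.restrict Omega))
    (hb : MemLp b 2 (volume.restrict Omega)), inner ℝ (ha.toLp a) (hb.toLp b) = 
      ∫ p in Omega, a p * b p := by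
    intro a b ha hb
    rw [L2.inner_def]
    refine integral_congr_ae ?_
    filter_upwards [ha.coeFn_toLp, hb.coeFn_toLp] with p h1 h2
    rw [h1, h2]
    simp [mul_comm]
  rw [key, key, key] at h1
  simpa [sq] using h1

lemma test_fderiv {φ : ℝ × ℝ → ℝ} (hφ : IsTest φ) (v : ℝ × ℝ) :
    Continuous (fun p => fderiv ℝ φ p v) ∧ HasCompactSupport (fun p => fderiv ℝ φ p v) ∧
      tsupport (fun p => fderiv ℝ φ p v) ⊆ Omega := by
  obtain ⟨h1, h2, h3⟩ := hφ
  refine ⟨(h1.continuous_fderiv (by simp)).clm_apply continuous_const, h2.fderiv_apply ℝ v, ?_⟩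
  exact (tsupport_fderiv_apply_subset ℝ v).trans h3

lemma test_ibp {φ ψ : ℝ × ℝ → ℝ} (hφ : IsTest φ) (hψ : IsTest ψ) (v : ℝ × ℝ) :
    ∫ p in Omega, φ p * fderiv ℝ ψ p v = - ∫ p in Omega, fderiv ℝ φ p v * ψ p := by
  have a1 := test_fderiv hφ v
  have a2 := test_fderiv hψ v
  have e1 : ∫ p in Omega, φ p * fderiv ℝ ψ p v = ∫ p, φ p * fderiv ℝ ψ p v := by
    apply setIntegral_eq_integral_of_forall_compl_eq_zero
    intro p hp
    rw [image_eq_zero_of_notMem_tsupport (fun h => hp (hφ.2.2 h)), zero_mul]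
  have e2 : ∫ p in Omega, fderiv ℝ φ p v * ψ p = ∫ p, fderiv ℝ φ p v * ψ p := by
    apply setIntegral_eq_integral_of_forall_compl_eq_zero
    intro p hp
    rw [image_eq_zero_of_notMem_tsupport (fun h => hp (hψ.2.2 h)), mul_zero]
  rw [e1, e2]
  have c1 := hφ.1.continuous
  have c2 := hψ.1.continuous
  apply integral_mul_fderiv_eq_neg_fderiv_mul_of_integrable
  · exact (a1.1.mul c2).integrable_of_hasCompactSupport (hψ.2.1.mul_left)
  · exact (c1.mul a2.1).integrable_of_hasCompactSupport (hφ.2.1.mul_right)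
  · exact (c1.mul c2).integrable_of_hasCompactSupport (hφ.2.1.mul_right)
  · exact fun x _ => (hφ.1.differentiable (by simp)).differentiableAt
  · exact fun x _ => (hψ.1.differentiable (by simp)).differentiableAt

lemma weak_of_approx (v : ℝ × ℝ) {w u g : ℝ × ℝ → ℝ} (hw : ContinuousOn w Omega)
    (hw0 : ∀ p ∈ Omega, 0 < w p) (hu : MemLp u 2 (volume.restrict Omega))
    (hg : MemLp (fun p => w p * g p) 2 (volume.restrict Omega))
    (happ : ∀ ε : ℝ, 0 < ε → ∃ φ : ℝ × ℝ → ℝ, IsTest φ ∧ ∫ p in Omega, (u p - φ p) ^ 2 < ε ∧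
      ∫ p in Omega, (w p * (g p - fderiv ℝ φ p v)) ^ 2 < ε) :
    LocallyIntegrableOn u Omega volume ∧ LocallyIntegrableOn g Omega volume ∧
    ∀ ψ : ℝ × ℝ → ℝ, IsTestOn Omega ψ →
      ∫ p in Omega, u p * fderiv ℝ ψ p v = - ∫ p in Omega, g p * ψ p := by
  have hwi : ContinuousOn (fun p => (w p)⁻¹) Omega := hw.inv₀ (fun p hp => (hw0 p hp).ne')
  have hgi : ∀ p ∈ Omega, (w p)⁻¹ * (w p * g p) = g p := fun p hp => by
    rw [inv_mul_cancel_left₀ (hw0 p hp).ne']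
  have lu : LocallyIntegrableOn u Omega volume :=
    IntegrableOn.locallyIntegrableOn (hu.integrable (by norm_num))
  have lg : LocallyIntegrableOn g Omega volume := by
    have h1 : LocallyIntegrableOn (fun p => w p * g p) Omega volume :=
      IntegrableOn.locallyIntegrableOn (hg.integrable (by norm_num))
    have h2 := h1.continuousOn_mul hwi omega_open.isLocallyClosed
    rw [locallyIntegrableOn_iff omega_open.isLocallyClosed] at h2 ⊢
    intro K hK hKc
    exact (h2 K hK hKc).congr_fun (fun p hp => hgi p (hK hp)) hKc.measurableSet
  refine ⟨lu, lg, ?_⟩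
  intro ψ hψ
  have m1 : MemLp (fun p => fderiv ℝ ψ p v) 2 (volume.restrict Omega) := by
    have a := test_fderiv hψ v
    simpa using aux_memLp (h := fun _ => 1) continuousOn_const a.1 a.2.1 a.2.2
  have m2 : MemLp (fun p => (w p)⁻¹ * ψ p) 2 (volume.restrict Omega) :=
    aux_memLp hwi hψ.1.continuous hψ.2.1 hψ.2.2
  set k := ∫ p in Omega, (fderiv ℝ ψ p v) ^ 2
  set l := ∫ p in Omega, ((w p)⁻¹ * ψ p) ^ 2
  have hk : 0 ≤ k := integral_nonneg fun p => sq_nonneg _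
  have hl : 0 ≤ l := integral_nonneg fun p => sq_nonneg _
  have rw1 : ∀ f : ℝ × ℝ → ℝ, ∫ p in Omega, f p * ψ p =
      ∫ p in Omega, (w p * f p) * ((w p)⁻¹ * ψ p) := by
    intro f
    refine setIntegral_congr_fun omega_meas fun p hp => ?_
    have := (hw0 p hp).ne'
    field_simp
  set E := (∫ p in Omega, u p * fderiv ℝ ψ p v) + ∫ p in Omega, g p * ψ p with hE
  suffices h : E = 0 by linarith
  have main : ∀ ε : ℝ, 0 < ε → E ^ 2 ≤ ε * (2 * k + 2 * l) := by
    intro ε hε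
    obtain ⟨φ, hφ, h1, h2⟩ := happ ε hε
    have a := test_fderiv hφ v
    have mφ : MemLp φ 2 (volume.restrict Omega) := by
      simpa using aux_memLp (h := fun _ => 1) continuousOn_const hφ.1.continuous hφ.2.1 hφ.2.2
    have mφ' : MemLp (fun p => w p * fderiv ℝ φ p v) 2 (volume.restrict Omega) :=
      aux_memLp hw a.1 a.2.1 a.2.2
    have d1 : MemLp (fun p => u p - φ p) 2 (volume.restrict Omega) := hu.sub mφ
    have d2 : MemLp (fun p => w p * (g p - fderiv ℝ φ p v)) 2 (volume.restrict Omega) := by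
      simpa only [mul_sub] using! hg.sub mφ'
    have e1 := aux_CS d1 m1
    have e2 := aux_CS d2 m2
    have s1 : ∫ p in Omega, (u p - φ p) * fderiv ℝ ψ p v =
        (∫ p in Omega, u p * fderiv ℝ ψ p v) - ∫ p in Omega, φ p * fderiv ℝ ψ p v := by
      have := integral_sub (hu.integrable_mul m1) (mφ.integrable_mul m1)
      simp only [Pi.mul_apply] at this
      rw [← this]
      simp only [sub_mul]
    have s2 : ∫ p in Omega, (w p * (g p - fderiv ℝ φ p v)) * ((w p)⁻¹ * ψ p) =
        (∫ p in Omega, g p * ψ p) - ∫ p in Omega, fderiv ℝ φ p v * ψ p := by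
      have := integral_sub (hg.integrable_mul m2) (mφ'.integrable_mul m2)
      simp only [Pi.mul_apply] at this
      rw [rw1 g, rw1, ← this]
      simp only [sub_mul, mul_sub]
    have s3 := test_ibp hφ hψ v
    have hEE : E = (∫ p in Omega, (u p - φ p) * fderiv ℝ ψ p v) +
        ∫ p in Omega, (w p * (g p - fderiv ℝ φ p v)) * ((w p)⁻¹ * ψ p) := by
      rw [s1, s2, s3, hE]; ring
    have f1 := e1.trans (mul_le_mul_of_nonneg_right h1.le hk)
    have f2 := e2.trans (mul_le_mul_of_nonneg_right h2.le hl)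
    rw [hEE]
    refine (add_sq_le).trans ?_
    linarith
  have : E ^ 2 ≤ 0 := by
    refine le_of_forall_pos_le_add fun δ hδ => ?_
    have := main (δ / (2 * k + 2 * l + 1)) (by positivity)
    refine this.trans ?_
    rw [zero_add, div_mul_eq_mul_div, div_le_iff₀ (by positivity)]
    nlinarith
  exact pow_eq_zero_iff (two_ne_zero) |>.1 (le_antisymm this (sq_nonneg _))

lemma test_comp {F : ℝ → ℝ} (hF : ContDiff ℝ (⊤ : ℕ∞) F) (h0 : F 0 = 0) {φ : ℝ × ℝ → ℝ}
    (hφ : IsTest φ) : IsTest (fun p => F (φ p)) := by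
  obtain ⟨h1, h2, h3⟩ := hφ
  refine ⟨hF.comp h1, h2.comp_left h0, ?_⟩
  exact (tsupport_comp_subset h0 φ).trans h3

lemma fderiv_comp_test {F : ℝ → ℝ} (hF : ContDiff ℝ (⊤ : ℕ∞) F) {φ : ℝ × ℝ → ℝ}
    (hφ : IsTest φ) (p v : ℝ × ℝ) :
    fderiv ℝ (fun p => F (φ p)) p v = deriv F (φ p) * fderiv ℝ φ p v := by
  have h1 : HasDerivAt F (deriv F (φ p)) (φ p) :=
    (hF.differentiable (by simp)).differentiableAt.hasDerivAt
  have h2 : HasFDerivAt φ (fderiv ℝ φ p) p :=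
    (hφ.1.differentiable (by simp)).differentiableAt.hasFDerivAt
  have := h1.comp_hasFDerivAt p h2
  have e := this.fderiv
  simp only [Function.comp_def] at e
  rw [e]
  simp

lemma memLp_deriv {F : ℝ → ℝ} (hF : ContDiff ℝ (⊤ : ℕ∞) F)
    (hd : ∀ t, 0 ≤ deriv F t ∧ deriv F t ≤ 1) {w u g : ℝ × ℝ → ℝ}
    (hu : AEStronglyMeasurable u (volume.restrict Omega))
    (hg : MemLp (fun p => w p * g p) 2 (volume.restrict Omega)) :
    MemLp (fun p => w p * (deriv F (u p) * g p)) 2 (volume.restrict Omega) := by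
  have hc : Continuous (deriv F) := hF.continuous_deriv (by simp)
  have h1 := hc.comp_aestronglyMeasurable hu
  have : MemLp (fun p => deriv F (u p) * (w p * g p)) 2 (volume.restrict Omega) := by
    refine hg.mono (h1.mul hg.1) (Eventually.of_forall fun p => ?_)
    rw [norm_mul, Real.norm_eq_abs, abs_of_nonneg (hd _).1]
    exact mul_le_of_le_one_left (norm_nonneg _) (hd _).2
  convert this using 2
  ring

lemma deriv_conv (v : ℝ × ℝ) {F : ℝ → ℝ} (hF : ContDiff ℝ (⊤ : ℕ∞) F)
    (hd : ∀ t, 0 ≤ deriv F t ∧ deriv F t ≤ 1) {w u g : ℝ × ℝ → ℝ}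
    (hw : ContinuousOn w Omega)
    (hu : AEStronglyMeasurable u (volume.restrict Omega))
    (hg : MemLp (fun p => w p * g p) 2 (volume.restrict Omega))
    {φ : ℕ → ℝ × ℝ → ℝ} (hφ : ∀ n, IsTest (φ n))
    (hae : ∀ᵐ p ∂(volume.restrict Omega), Tendsto (fun n => φ n p) atTop (nhds (u p)))
    (hconv : Tendsto (fun n => ∫ p in Omega, (w p * (g p - fderiv ℝ (φ n) p v)) ^ 2)
      atTop (nhds 0)) :
    Tendsto (fun n => ∫ p in Omega, (w p * (deriv F (u p) * g p -
      fderiv ℝ (fun p => F (φ n p)) p v)) ^ 2) atTop (nhds 0) := by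
  have hc : Continuous (deriv F) := hF.continuous_deriv (by simp)
  have hum := hc.comp_aestronglyMeasurable hu
  have hφm : ∀ n, AEStronglyMeasurable (fun p => deriv F (φ n p)) (volume.restrict Omega) :=
    fun n => (hc.comp (hφ n).1.continuous).aestronglyMeasurable
  have bd : ∀ a b : ℝ, |deriv F a - deriv F b| ≤ 1 := fun a b => by
    rw [abs_le]; constructor <;> linarith [(hd a).1, (hd a).2, (hd b).1, (hd b).2]
  have m2 : ∀ n, MemLp (fun p => (deriv F (u p) - deriv F (φ n p)) * (w p * g p)) 2
      (volume.restrict Omega) := by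
    intro n
    refine hg.mono ((hum.sub (hφm n)).mul hg.1) (Eventually.of_forall fun p => ?_)
    rw [norm_mul, Real.norm_eq_abs]
    exact mul_le_of_le_one_left (norm_nonneg _) (bd _ _)
  have m1 : ∀ n, MemLp (fun p => w p * (g p - fderiv ℝ (φ n) p v)) 2
      (volume.restrict Omega) := by
    intro n
    have a := test_fderiv (hφ n) v
    simpa only [mul_sub] using! hg.sub (aux_memLp hw a.1 a.2.1 a.2.2)
  have t2 : Tendsto (fun n => ∫ p in Omega,
      ((deriv F (u p) - deriv F (φ n p)) * (w p * g p)) ^ 2) atTop (nhds 0) := by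
    have : (0:ℝ) = ∫ p in Omega, (0:ℝ) := by simp
    rw [this]
    refine tendsto_integral_of_dominated_convergence (fun p => (w p * g p) ^ 2)
      (fun n => ((m2 n).1.pow 2)) hg.integrable_sq ?_ ?_
    · intro n
      refine Eventually.of_forall fun p => ?_
      rw [Real.norm_eq_abs, abs_of_nonneg (sq_nonneg _), mul_pow]
      refine mul_le_of_le_one_left (sq_nonneg _) ?_
      rw [sq_le_one_iff_abs_le_one]
      exact bd _ _
    · filter_upwards [hae] with p hp
      have h1 : Tendsto (fun n => deriv F (φ n p)) atTop (nhds (deriv F (u p))) :=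
        (hc.tendsto _).comp hp
      have h2 := ((h1.const_sub (deriv F (u p))).mul_const (w p * g p)).pow 2
      simpa using h2
  have t3 := (hconv.const_mul 2).add (t2.const_mul 2)
  simp only [mul_zero, add_zero] at t3
  refine squeeze_zero (fun n => integral_nonneg fun p => sq_nonneg _) (fun n => ?_) t3
  rw [← integral_const_mul, ← integral_const_mul, ← integral_add
    ((m1 n).integrable_sq.const_mul 2) ((m2 n).integrable_sq.const_mul 2)]
  refine integral_mono_of_nonneg (Eventually.of_forall fun p => sq_nonneg _)
    (((m1 n).integrable_sq.const_mul 2).add ((m2 n).integrable_sq.const_mul 2))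
    (Eventually.of_forall fun p => ?_)
  simp only [Pi.add_apply]
  rw [fderiv_comp_test hF (hφ n)]
  set A := w p * (g p - fderiv ℝ (φ n) p v) with hA
  set B := (deriv F (u p) - deriv F (φ n p)) * (w p * g p) with hB
  have e : w p * (deriv F (u p) * g p - deriv F (φ n p) * fderiv ℝ (φ n) p v)
    = deriv F (φ n p) * A + B := by rw [hA, hB]; ring
  rw [e]
  refine add_sq_le.trans ?_
  have : (deriv F (φ n p) * A) ^ 2 ≤ A ^ 2 := by
    rw [mul_pow]
    refine mul_le_of_le_one_left (sq_nonneg _) ?_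
    rw [sq_le_one_iff_abs_le_one, abs_of_nonneg (hd _).1]
    exact (hd _).2
  linarith

lemma w1_cont (α : ℝ) : ContinuousOn (fun p : ℝ × ℝ => p.2 ^ α) Omega :=
  continuousOn_snd.rpow_const fun _ hp => Or.inl hp.2.1.ne'

lemma w2_cont (α : ℝ) : ContinuousOn (fun p : ℝ × ℝ => p.1 ^ α) Omega :=
  continuousOn_fst.rpow_const fun _ hp => Or.inl hp.1.1.ne'

lemma chain_H10 {α₁ α₂ : ℝ} {u gx gy : ℝ × ℝ → ℝ} (h : MemH10 α₁ α₂ u gx gy)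
    {F : ℝ → ℝ} (hF : ContDiff ℝ (⊤ : ℕ∞) F) (h0 : F 0 = 0)
    (hd : ∀ t, 0 ≤ deriv F t ∧ deriv F t ≤ 1) :
    MemH10 α₁ α₂ (fun p => F (u p)) (fun p => deriv F (u p) * gx p)
      (fun p => deriv F (u p) * gy p) := by
  obtain ⟨hm, happ⟩ := h
  have hu := hm.memL2.1
  choose φ hφ hlt using fun n : ℕ => happ (1 / ((n:ℝ) + 1)) (by positivity)
  have lim0 : Tendsto (fun n : ℕ => (1 / ((n:ℝ) + 1)) ^ 2) atTop (nhds 0) := by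
    simpa using (tendsto_one_div_add_atTop_nhds_zero_nat (𝕜 := ℝ)).pow 2
  have hlt' : ∀ n : ℕ, (∫ p in Omega, (u p - φ n p) ^ 2) +
    (∫ p in Omega, (p.2 ^ α₁ * (gx p - pdx (φ n) p)) ^ 2) +
    (∫ p in Omega, (p.1 ^ α₂ * (gy p - pdy (φ n) p)) ^ 2) ≤ (1 / ((n:ℝ) + 1)) ^ 2 := by
    intro n
    have := hlt n
    unfold H1Norm at this
    rw [Real.sqrt_lt' (by positivity)] at this
    exact this.le
  have n1 : ∀ n, 0 ≤ ∫ p in Omega, (u p - φ n p) ^ 2 := fun n => integral_nonneg fun p => sq_nonneg _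
  have n2 : ∀ n, 0 ≤ ∫ p in Omega, (p.2 ^ α₁ * (gx p - pdx (φ n) p)) ^ 2 :=
    fun n => integral_nonneg fun p => sq_nonneg _
  have n3 : ∀ n, 0 ≤ ∫ p in Omega, (p.1 ^ α₂ * (gy p - pdy (φ n) p)) ^ 2 :=
    fun n => integral_nonneg fun p => sq_nonneg _
  have c1 : Tendsto (fun n => ∫ p in Omega, (u p - φ n p) ^ 2) atTop (nhds 0) :=
    squeeze_zero n1 (fun n => by linarith [hlt' n, n2 n, n3 n]) lim0
  have c2 : Tendsto (fun n => ∫ p in Omega, (p.2 ^ α₁ * (gx p - pdx (φ n) p)) ^ 2) atTop (nhds 0) :=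
    squeeze_zero n2 (fun n => by linarith [hlt' n, n1 n, n3 n]) lim0
  have c3 : Tendsto (fun n => ∫ p in Omega, (p.1 ^ α₂ * (gy p - pdy (φ n) p)) ^ 2) atTop (nhds 0) :=
    squeeze_zero n3 (fun n => by linarith [hlt' n, n1 n, n2 n]) lim0
  have mφ : ∀ n, MemLp (φ n) 2 (volume.restrict Omega) := fun n => by
    simpa using aux_memLp (h := fun _ => 1) continuousOn_const (hφ n).1.continuous (hφ n).2.1 (hφ n).2.2
  -- subsequence
  have tm : TendstoInMeasure (volume.restrict Omega) φ atTop u := by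
    refine tendstoInMeasure_of_tendsto_eLpNorm (p := 2) (by norm_num) (fun n => (mφ n).1) hu ?_
    have : ∀ n, eLpNorm (φ n - u) 2 (volume.restrict Omega) =
        ENNReal.ofReal ((∫ p in Omega, (u p - φ n p) ^ 2) ^ ((2:ℝ)⁻¹)) := by
      intro n
      rw [((mφ n).sub hm.memL2).eLpNorm_eq_integral_rpow_norm (by norm_num) (by norm_num)]
      simp only [Pi.sub_apply, ENNReal.toReal_ofNat, Real.rpow_ofNat, Real.norm_eq_abs, sq_abs]
      congr 3
      ext p
      ring
    simp only [this]
    have h2 := c1.rpow_const (p := (2:ℝ)⁻¹) (Or.inr (by norm_num))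
    rw [Real.zero_rpow (by norm_num)] at h2
    simpa using ENNReal.tendsto_ofReal h2
  obtain ⟨ns, hns, hae⟩ := tm.exists_seq_tendsto_ae
  have d1 : Tendsto (fun n => ∫ p in Omega, (F (u p) - F (φ (ns n) p)) ^ 2) atTop (nhds 0) := by
    refine squeeze_zero (fun n => integral_nonneg fun p => sq_nonneg _) (fun n => ?_)
      (c1.comp hns.tendsto_atTop)
    refine integral_mono_of_nonneg (Eventually.of_forall fun p => sq_nonneg _)
      ((hm.memL2.sub (mφ _)).integrable_sq) (Eventually.of_forall fun p => ?_)
    exact sq_le_sq.2 (aux_lip hF hd _ _)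
  have d2 := deriv_conv (1, 0) hF hd (w1_cont α₁) hu hm.wgx (fun n => hφ (ns n)) hae
    (c2.comp hns.tendsto_atTop)
  have d3 := deriv_conv (0, 1) hF hd (w2_cont α₂) hu hm.wgy (fun n => hφ (ns n)) hae
    (c3.comp hns.tendsto_atTop)
  have mF : MemLp (fun p => F (u p)) 2 (volume.restrict Omega) := by
    refine hm.memL2.mono (hF.continuous.comp_aestronglyMeasurable hu)
      (Eventually.of_forall fun p => ?_)
    simpa [h0] using aux_lip hF hd (u p) 0
  have mx := memLp_deriv hF hd hu hm.wgx
  have my := memLp_deriv hF hd hu hm.wgy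
  have tst : ∀ n, IsTest (fun p => F (φ (ns n) p)) := fun n => test_comp hF h0 (hφ _)
  have small : ∀ ε : ℝ, 0 < ε → ∃ n, (∫ p in Omega, (F (u p) - F (φ (ns n) p)) ^ 2) < ε ∧
      (∫ p in Omega, (p.2 ^ α₁ * (deriv F (u p) * gx p -
        fderiv ℝ (fun p => F (φ (ns n) p)) p (1, 0))) ^ 2) < ε ∧
      (∫ p in Omega, (p.1 ^ α₂ * (deriv F (u p) * gy p -
        fderiv ℝ (fun p => F (φ (ns n) p)) p (0, 1))) ^ 2) < ε := by
    intro ε hε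
    exact ((d1.eventually_lt_const hε).and
      ((d2.eventually_lt_const hε).and (d3.eventually_lt_const hε))).exists
  refine ⟨⟨mF, ?_, ?_, mx, my⟩, ?_⟩
  · refine weak_of_approx (1, 0) (w1_cont α₁) (fun p hp => Real.rpow_pos_of_pos hp.2.1 _) mF mx ?_
    intro ε hε
    obtain ⟨n, h1, h2, h3⟩ := small ε hε
    exact ⟨_, tst n, h1, h2⟩
  · refine weak_of_approx (0, 1) (w2_cont α₂) (fun p hp => Real.rpow_pos_of_pos hp.1.1 _) mF my ?_
    intro ε hε
    obtain ⟨n, h1, h2, h3⟩ := small ε hε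
    exact ⟨_, tst n, h1, h3⟩
  · intro ε hε
    obtain ⟨n, h1, h2, h3⟩ := small (ε ^ 2 / 3) (by positivity)
    refine ⟨_, tst n, ?_⟩
    unfold H1Norm
    rw [Real.sqrt_lt' hε]
    simp only [pdx, pdy]
    linarith

lemma bern_strict {a b q : ℝ} (ha : 0 < a) (hab : a < b) (hq : 1 < q) :
    q * a ^ (q - 1) * (b - a) < b ^ q - a ^ q := by
  have h := one_add_mul_self_lt_rpow_one_add (s := (b - a) / a)
    (by have : 0 < (b - a) / a := div_pos (by linarith) ha
        linarith) (div_pos (by linarith) ha).ne' hq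
  have e : 1 + (b - a) / a = b / a := by field_simp; ring
  rw [e, Real.div_rpow (by linarith) ha.le, lt_div_iff₀ (Real.rpow_pos_of_pos ha _)] at h
  have e2 : a ^ q = a ^ (q - 1) * a := by
    rw [Real.rpow_sub_one ha.ne']; field_simp
  have e3 : (1 + q * ((b - a) / a)) * a ^ q = a ^ q + q * a ^ (q - 1) * (b - a) := by
    rw [e2]; field_simp
  linarith

lemma bern_conc {N N' r : ℝ} (hN : 0 < N) (hN' : 0 ≤ N') (hr : 0 ≤ r) (hr1 : r ≤ 1) :
    r * N ^ (r - 1) * (N - N') ≤ N ^ r - N' ^ r := by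
  have h := rpow_one_add_le_one_add_mul_self (s := (N' - N) / N)
    (by rw [le_div_iff₀ hN]; linarith) hr hr1
  have e : 1 + (N' - N) / N = N' / N := by field_simp; ring
  rw [e, Real.div_rpow hN' hN.le, div_le_iff₀ (Real.rpow_pos_of_pos hN _)] at h
  have e2 : N ^ r = N ^ (r - 1) * N := by
    rw [Real.rpow_sub_one hN.ne']; field_simp
  have e3 : (1 + r * ((N' - N) / N)) * N ^ r = N ^ r + r * N ^ (r - 1) * (N' - N) := by
    rw [e2]; field_simp
  linarith

lemma bern_pt {t s c q : ℝ} (hc : 0 < c) (hcs : c ≤ s) (hst : s < t) (hq : 1 < q) :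
    q * c ^ (2 * (q - 1)) * (t ^ 2 - s ^ 2) < |t| ^ (2 * q) - |s| ^ (2 * q) := by
  have hs : 0 < s := hc.trans_le hcs
  have ht : 0 < t := hs.trans hst
  have h := bern_strict (a := s ^ 2) (b := t ^ 2) (by positivity) (by nlinarith) hq
  have e : ∀ x : ℝ, 0 < x → ∀ y : ℝ, (x ^ 2) ^ y = x ^ (2 * y) := fun x hx y => by
    rw [← Real.rpow_natCast, ← Real.rpow_mul hx.le]; simp
  rw [e s hs, e t ht, e s hs] at h
  rw [abs_of_pos hs, abs_of_pos ht]
  refine lt_of_le_of_lt ?_ h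
  have h1 : c ^ (2 * (q - 1)) ≤ s ^ (2 * (q - 1)) :=
    Real.rpow_le_rpow hc.le hcs (by linarith)
  have h2 : 0 ≤ t ^ 2 - s ^ 2 := by nlinarith
  gcongr

/-- `L^∞` bounds for the optimal potential: with `λ = J(u₀)` and
`V₀ = M ‖u₀²‖_{L^q}^{1−q} |u₀|^{2(q−1)}` built from a nonnegative minimizer `u₀` of
`J`, one has `ess sup_Ω u₀ ≤ (λ/M)^{(p−1)/2} ‖u₀‖_{L^{2q}(Ω)}` and
`ess sup_Ω V₀ ≤ λ`. -/
theorem optimal_potential_Linfty_bounds (α₁ α₂ ppow qe M : ℝ)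
    (hα₁ : α₁ ∈ Ioo (0:ℝ) (1/2)) (hα₂ : α₂ ∈ Ioo (0:ℝ) (1/2))
    (hp : 1 < ppow) (hq : qe = ppow / (ppow - 1)) (hM : 0 < M)
    (u₀ g₀x g₀y : ℝ × ℝ → ℝ) (hmemU : MemU α₁ α₂ qe u₀ g₀x g₀y)
    (hpos : ∀ᵐ p ∂(volume.restrict Omega), 0 ≤ u₀ p)
    (hmin : ∀ u gx gy : ℝ × ℝ → ℝ, MemU α₁ α₂ qe u gx gy →
      Jfun α₁ α₂ M qe u₀ g₀x g₀y ≤ Jfun α₁ α₂ M qe u gx gy) :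
    ∀ lam : ℝ, lam = Jfun α₁ α₂ M qe u₀ g₀x g₀y →
    ∀ V₀ : ℝ × ℝ → ℝ,
      (V₀ = fun p : ℝ × ℝ =>
        M * (∫ q in Omega, |u₀ q| ^ (2 * qe)) ^ ((1 - qe) / qe) *
          |u₀ p| ^ (2 * (qe - 1))) →
      (∀ᵐ p ∂(volume.restrict Omega),
        u₀ p ≤ (lam / M) ^ ((ppow - 1) / 2) *
          (∫ q in Omega, |u₀ q| ^ (2 * qe)) ^ (1 / (2 * qe))) ∧
      (∀ᵐ p ∂(volume.restrict Omega), V₀ p ≤ lam) := by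
  intro lam hlam V₀ hV
  obtain ⟨hH, hL, hne⟩ := hmemU
  have hp1 : 0 < ppow - 1 := by linarith
  have hq1 : 1 < qe := by rw [hq, lt_div_iff₀ hp1]; linarith
  have hq0 : 0 < qe := by linarith
  have hpq : (ppow - 1) * (qe - 1) = 1 := by rw [hq]; field_simp; ring
  have hm := hH.1
  have hiu : IntegrableOn (fun p => |u₀ p| ^ (2 * qe)) Omega volume := by
    have := hL.integrable_norm_rpow (by simp; linarith) ENNReal.ofReal_ne_top
    rw [ENNReal.toReal_ofReal (by linarith)] at this
    simpa using! this
  have hiu2 : Integrable (fun p => u₀ p ^ 2) (volume.restrict Omega) := hm.memL2.integrable_sq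
  set N := ∫ q in Omega, |u₀ q| ^ (2 * qe) with hN
  set S := ∫ q in Omega, u₀ q ^ 2 with hS
  have posOf : ∀ f : ℝ × ℝ → ℝ, ¬ (∀ᵐ p ∂(volume.restrict Omega), f p = 0) →
      Integrable (fun p => f p ^ 2) (volume.restrict Omega) → 0 < ∫ p in Omega, f p ^ 2 := by
    intro f hf hfi
    refine lt_of_le_of_ne (integral_nonneg fun p => sq_nonneg _) fun h => hf ?_
    have := (integral_eq_zero_iff_of_nonneg (fun p => sq_nonneg (f p)) hfi).1 h.symm
    filter_upwards [this] with p hp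
    simpa using hp
  have hSpos : 0 < S := posOf u₀ hne hiu2
  have hNpos : 0 < N := by
    refine lt_of_le_of_ne (integral_nonneg fun p => Real.rpow_nonneg (abs_nonneg _) _) fun h => hne ?_
    have := (integral_eq_zero_iff_of_nonneg
      (fun p => Real.rpow_nonneg (abs_nonneg (u₀ p)) (2 * qe)) hiu).1 h.symm
    filter_upwards [this] with p hp
    have := (Real.rpow_eq_zero (abs_nonneg (u₀ p)) (by linarith)).1 hp
    simpa using this
  have a1nn : ∀ u gx gy : ℝ × ℝ → ℝ, 0 ≤ a1Form α₁ α₂ u gx gy u gx gy := fun u gx gy =>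
    integral_nonneg fun p => add_nonneg (mul_self_nonneg _) (mul_self_nonneg _)
  set A := a1Form α₁ α₂ u₀ g₀x g₀y u₀ g₀x g₀y with hA
  have hlamS : lam * S = A + M * N ^ (1 / qe) := by
    rw [hlam]; unfold Jfun; rw [← hS, ← hN, ← hA]; field_simp
  have hNr : 0 < N ^ (1 / qe) := Real.rpow_pos_of_pos hNpos _
  have hlampos : 0 < lam := by
    have : 0 < lam * S := by rw [hlamS]; have := a1nn u₀ g₀x g₀y; positivity
    exact pos_of_mul_pos_left this hSpos.le
  set c := (lam / M) ^ ((ppow - 1) / 2) * N ^ (1 / (2 * qe)) with hc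
  have hlm : 0 < lam / M := by positivity
  have hcpos : 0 < c := mul_pos (Real.rpow_pos_of_pos hlm _) (Real.rpow_pos_of_pos hNpos _)
  have hcp : c ^ (2 * (qe - 1)) = lam / M * N ^ ((qe - 1) / qe) := by
    rw [hc, Real.mul_rpow (Real.rpow_nonneg hlm.le _) (Real.rpow_nonneg hNpos.le _),
      ← Real.rpow_mul hlm.le, ← Real.rpow_mul hNpos.le]
    congr 1
    · rw [show (ppow - 1) / 2 * (2 * (qe - 1)) = 1 by linarith, Real.rpow_one]
    · congr 1; field_simp
  have claim : ∀ᵐ p ∂(volume.restrict Omega), u₀ p ≤ c := by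
    obtain ⟨F, hF, hFle, hFgt, hFd⟩ := aux_F c
    have hF0 : F 0 = 0 := hFle 0 hcpos.le
    have hFabs : ∀ t, |F t| ≤ |t| := fun t => by simpa [hF0] using aux_lip hF hFd t 0
    have hFz : ∀ t, F t = 0 → t = 0 := by
      intro t ht
      by_cases h : t ≤ c
      · rw [← hFle t h, ht]
      · have := (hFgt t (not_le.1 h)).2
        linarith
    have hH' := chain_H10 hH hF hF0 hFd
    have hL' : MemLp (fun p => F (u₀ p)) (ENNReal.ofReal (2 * qe)) (volume.restrict Omega) :=
      hL.mono (hF.continuous.comp_aestronglyMeasurable hL.1)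
        (Eventually.of_forall fun p => hFabs _)
    have hne' : ¬ (∀ᵐ p ∂(volume.restrict Omega), F (u₀ p) = 0) := fun h =>
      hne (h.mono fun p hp => hFz _ hp)
    have hJ := hmin _ _ _ ⟨hH', hL', hne'⟩
    rw [← hlam] at hJ
    have hiw : IntegrableOn (fun p => |F (u₀ p)| ^ (2 * qe)) Omega volume := by
      have := hL'.integrable_norm_rpow (by simp; linarith) ENNReal.ofReal_ne_top
      rw [ENNReal.toReal_ofReal (by linarith)] at this
      simpa using! this
    have hiw2 : Integrable (fun p => F (u₀ p) ^ 2) (volume.restrict Omega) :=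
      hH'.1.memL2.integrable_sq
    have hS'pos := posOf _ hne' hiw2
    have hBA : a1Form α₁ α₂ (fun p => F (u₀ p)) (fun p => deriv F (u₀ p) * g₀x p)
      (fun p => deriv F (u₀ p) * g₀y p) (fun p => F (u₀ p)) (fun p => deriv F (u₀ p) * g₀x p)
      (fun p => deriv F (u₀ p) * g₀y p) ≤ A := by
      refine integral_mono_of_nonneg
        (Eventually.of_forall fun p => add_nonneg (mul_self_nonneg _) (mul_self_nonneg _)) ?_
        (Eventually.of_forall fun p => ?_)
      · have := hm.wgx.integrable_sq.add hm.wgy.integrable_sq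
        simpa only [sq] using! this
      · have h1 : deriv F (u₀ p) * deriv F (u₀ p) ≤ 1 := by
          have := hFd (u₀ p); nlinarith
        have key : ∀ x y : ℝ, (x * (deriv F (u₀ p) * y)) * (x * (deriv F (u₀ p) * y)) ≤
            (x * y) * (x * y) := by
          intro x y
          have := mul_le_mul_of_nonneg_right h1 (mul_self_nonneg (x * y))
          linarith
        exact add_le_add (key _ _) (key _ _)
    unfold Jfun at hJ
    rw [le_div_iff₀ hS'pos] at hJ
    set B := a1Form α₁ α₂ (fun p => F (u₀ p)) (fun p => deriv F (u₀ p) * g₀x p)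
      (fun p => deriv F (u₀ p) * g₀y p) (fun p => F (u₀ p)) (fun p => deriv F (u₀ p) * g₀x p)
      (fun p => deriv F (u₀ p) * g₀y p)
    set N' := ∫ p in Omega, |F (u₀ p)| ^ (2 * qe) with hN'
    set S' := ∫ p in Omega, F (u₀ p) ^ 2 with hS'
    have hN'nn : 0 ≤ N' := integral_nonneg fun p => Real.rpow_nonneg (abs_nonneg _) _
    have hconc := bern_conc (r := 1 / qe) hNpos hN'nn (by positivity)
      (by rw [div_le_one hq0]; linarith)
    have h1 : M * (1 / qe * N ^ (1 / qe - 1) * (N - N')) ≤ lam * (S - S') := by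
      have := mul_le_mul_of_nonneg_left hconc hM.le
      linarith
    have h2 : N - N' ≤ qe * c ^ (2 * (qe - 1)) * (S - S') := by
      have hP : N ^ (1 / qe - 1) * N ^ ((qe - 1) / qe) = 1 := by
        rw [← Real.rpow_add hNpos, show 1 / qe - 1 + (qe - 1) / qe = 0 by field_simp; ring,
          Real.rpow_zero]
      have hQ : 0 < N ^ ((qe - 1) / qe) := Real.rpow_pos_of_pos hNpos _
      rw [hcp]
      have h3 := mul_le_mul_of_nonneg_left h1
        (show 0 ≤ qe / M * N ^ ((qe - 1) / qe) by positivity)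
      calc N - N' = (N ^ (1 / qe - 1) * N ^ ((qe - 1) / qe)) * (N - N') := by rw [hP, one_mul]
        _ = qe / M * N ^ ((qe - 1) / qe) * (M * (1 / qe * N ^ (1 / qe - 1) * (N - N'))) := by
          field_simp
        _ ≤ _ := h3
        _ = _ := by field_simp
    have hDi : Integrable (fun p => (|u₀ p| ^ (2 * qe) - |F (u₀ p)| ^ (2 * qe)) -
        qe * c ^ (2 * (qe - 1)) * (u₀ p ^ 2 - F (u₀ p) ^ 2)) (volume.restrict Omega) :=
      (hiu.sub hiw).sub ((hiu2.sub hiw2).const_mul _)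
    have hDpt : ∀ p, 0 ≤ (|u₀ p| ^ (2 * qe) - |F (u₀ p)| ^ (2 * qe)) -
        qe * c ^ (2 * (qe - 1)) * (u₀ p ^ 2 - F (u₀ p) ^ 2) := by
      intro p
      by_cases h : u₀ p ≤ c
      · simp [hFle _ h]
      · have h' := hFgt _ (not_le.1 h)
        have := bern_pt hcpos h'.2 h'.1 hq1
        linarith
    have hDint : ∫ p in Omega, ((|u₀ p| ^ (2 * qe) - |F (u₀ p)| ^ (2 * qe)) -
        qe * c ^ (2 * (qe - 1)) * (u₀ p ^ 2 - F (u₀ p) ^ 2)) = 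
        (N - N') - qe * c ^ (2 * (qe - 1)) * (S - S') := by
      have i1 : Integrable (fun p => |u₀ p| ^ (2 * qe) - |F (u₀ p)| ^ (2 * qe))
        (volume.restrict Omega) := hiu.sub hiw
      have i2 : Integrable (fun p => qe * c ^ (2 * (qe - 1)) * (u₀ p ^ 2 - F (u₀ p) ^ 2))
        (volume.restrict Omega) := (hiu2.sub hiw2).const_mul _
      rw [integral_sub i1 i2, integral_sub hiu hiw,
        integral_const_mul, integral_sub hiu2 hiw2]
    have hz := le_antisymm (hDint.le.trans (sub_nonpos.2 h2)) (integral_nonneg hDpt)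
    have hae := (integral_eq_zero_iff_of_nonneg hDpt hDi).1 hz
    filter_upwards [hae] with p hp
    by_contra h
    have h' := hFgt _ (not_le.1 h)
    have := bern_pt hcpos h'.2 h'.1 hq1
    simp only [Pi.zero_apply] at hp
    linarith
  refine ⟨claim, ?_⟩
  filter_upwards [claim, hpos] with p h1 h2
  rw [hV]
  simp only
  rw [abs_of_nonneg h2]
  have h3 : u₀ p ^ (2 * (qe - 1)) ≤ c ^ (2 * (qe - 1)) := Real.rpow_le_rpow h2 h1 (by linarith)
  rw [hcp] at h3
  have hR : 0 < N ^ ((1 - qe) / qe) := Real.rpow_pos_of_pos hNpos _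
  have hP : N ^ ((1 - qe) / qe) * N ^ ((qe - 1) / qe) = 1 := by
    rw [← Real.rpow_add hNpos, show (1 - qe) / qe + (qe - 1) / qe = 0 by field_simp; ring,
      Real.rpow_zero]
  calc M * N ^ ((1 - qe) / qe) * u₀ p ^ (2 * (qe - 1))
      ≤ M * N ^ ((1 - qe) / qe) * (lam / M * N ^ ((qe - 1) / qe)) := by gcongr
    _ = lam * (N ^ ((1 - qe) / qe) * N ^ ((qe - 1) / qe)) := by field_simp
    _ = lam := by rw [hP, mul_one]
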